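/- arXiv:1310.2816 — 4 statements merged into one kernel-verified Lean document; each statement's English description precedes it below -/
import Mathlib

section
/- For every real number a, ∫_0^∞ (2πλ)^{−1/2} · exp(−a²/(2λ) − λ/2) dλ = exp(−|a|). -/
open MeasureTheory Real

lemma smi_pos (b : ℝ) (hb : 0 < b) :
    ∫ l in Set.Ioi (0 : ℝ),
      (1 / Real.sqrt (2 * Real.pi * l)) * Real.exp (-b ^ 2 / (2 * l) - l / 2)
      = Real.exp (-b) := by
  have hr : ∀ u : ℝ, 0 < √(u ^ 2 + 4 * b) := fun u => by positivity
  have hr2 : ∀ u : ℝ, √(u ^ 2 + 4 * b) ^ 2 = u ^ 2 + 4 * b := fun u =>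
    Real.sq_sqrt (by positivity)
  obtain ⟨s, hs⟩ : ∃ s : ℝ → ℝ, s = fun u => (u + √(u ^ 2 + 4 * b)) / 2 := ⟨_, rfl⟩
  have hspos : ∀ u, 0 < s u := by
    intro u
    have : |u| < √(u ^ 2 + 4 * b) := by
      rw [← Real.sqrt_sq_eq_abs]
      exact Real.sqrt_lt_sqrt (by positivity) (by linarith)
    have h2 := neg_abs_le u
    simp only [hs]; linarith
  have hsb : ∀ u, s u * (s u - u) = b := by
    intro u
    have := hr2 u
    simp only [hs]; nlinarith
  have hsu : ∀ u, u = s u - b / s u := by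
    intro u
    have h1 := hsb u
    have h2 := (hspos u).ne'
    field_simp
    linarith
  have hsd : ∀ u, HasDerivAt s ((1 + u / √(u ^ 2 + 4 * b)) / 2) u := by
    intro u
    have h1 : HasDerivAt (fun u : ℝ => u ^ 2 + 4 * b) (2 * u) u := by
      simpa using (hasDerivAt_pow 2 u).add_const (4 * b)
    have h2 := ((hasDerivAt_id u).add (h1.sqrt (by positivity))).div_const 2
    rw [hs]
    refine HasDerivAt.congr_deriv h2 ?_
    have := (hr u).ne'
    field_simp
  have hd : ∀ u, HasDerivAt (fun u => s u ^ 2) (s u * (1 + u / √(u ^ 2 + 4 * b))) u := by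
    intro u
    refine HasDerivAt.congr_deriv ((hsd u).pow 2) ?_
    norm_num; ring
  have himg : (fun u => s u ^ 2) '' Set.univ = Set.Ioi 0 := by
    ext l
    simp only [Set.image_univ, Set.mem_range, Set.mem_Ioi]
    constructor
    · rintro ⟨u, rfl⟩
      have := hspos u
      positivity
    · intro hl
      have hq : 0 < √l := Real.sqrt_pos.2 hl
      refine ⟨√l - b / √l, ?_⟩
      have : (√l - b / √l) ^ 2 + 4 * b = (√l + b / √l) ^ 2 := by field_simp; ring
      simp only [hs]
      rw [this, Real.sqrt_sq (by positivity)]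
      ring_nf
      exact Real.sq_sqrt hl.le
  have hinj : Set.InjOn (fun u => s u ^ 2) Set.univ := by
    intro u _ v _ h
    have h' : s u = s v := (pow_left_inj₀ (hspos u).le (hspos v).le two_ne_zero).1 h
    rw [hsu u, hsu v, h']
  rw [← himg, integral_image_eq_integral_abs_deriv_smul MeasurableSet.univ
    (fun u _ => (hd u).hasDerivWithinAt) hinj]
  have key : ∀ u, |s u * (1 + u / √(u ^ 2 + 4 * b))| •
      ((1 / √(2 * π * s u ^ 2)) * rexp (-b ^ 2 / (2 * s u ^ 2) - s u ^ 2 / 2))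
      = rexp (-b) / √(2 * π) * (rexp (-(1 / 2) * u ^ 2)
        + u / √(u ^ 2 + 4 * b) * rexp (-(1 / 2) * u ^ 2)) := by
    intro u
    have hp := hspos u
    have hu := hr u
    have h1 : 1 + u / √(u ^ 2 + 4 * b) = 2 * s u / √(u ^ 2 + 4 * b) := by
      simp only [hs]; field_simp; ring
    have h2 : 0 ≤ s u * (1 + u / √(u ^ 2 + 4 * b)) := by rw [h1]; positivity
    have h3 : -b ^ 2 / (2 * s u ^ 2) - s u ^ 2 / 2 = -b + -(1 / 2) * u ^ 2 := by
      have h4 : u ^ 2 = (s u - b / s u) ^ 2 := by rw [← hsu u]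
      rw [h4]; field_simp; ring
    rw [abs_of_nonneg h2, h3, Real.exp_add, Real.sqrt_mul (by positivity), Real.sqrt_sq hp.le,
      smul_eq_mul]
    field_simp
  simp only [key, Measure.restrict_univ]
  have hg : Integrable (fun u : ℝ => rexp (-(1 / 2) * u ^ 2)) :=
    integrable_exp_neg_mul_sq (by norm_num)
  have hi : Integrable (fun u : ℝ => u / √(u ^ 2 + 4 * b) * rexp (-(1 / 2) * u ^ 2)) := by
    refine hg.bdd_mul (c := 1) ?_ ?_
    · exact (Measurable.aestronglyMeasurable (by fun_prop))
    · refine Filter.Eventually.of_forall fun u => ?_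
      rw [Real.norm_eq_abs, abs_div, abs_of_pos (hr u), div_le_one (hr u), ← Real.sqrt_sq_eq_abs]
      exact Real.sqrt_le_sqrt (by linarith)
  have hodd : ∫ u : ℝ, u / √(u ^ 2 + 4 * b) * rexp (-(1 / 2) * u ^ 2) = 0 := by
    have := integral_neg_eq_self (fun u : ℝ => u / √(u ^ 2 + 4 * b) * rexp (-(1 / 2) * u ^ 2)) volume
    simp only [neg_sq, neg_div, neg_mul, integral_neg] at this
    simp only [neg_mul]
    linarith
  rw [integral_const_mul, integral_add hg hi, hodd, integral_gaussian, add_zero,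
    show π / (1 / 2) = 2 * π by ring]
  have : 0 < √(2 * π) := by positivity
  field_simp

lemma smi_zero :
    ∫ l in Set.Ioi (0 : ℝ),
      (1 / Real.sqrt (2 * Real.pi * l)) * Real.exp (-0 ^ 2 / (2 * l) - l / 2) = 1 := by
  rw [← integral_comp_rpow_Ioi_of_pos (p := 2) two_pos]
  have : ∀ x ∈ Set.Ioi (0 : ℝ), ((2 : ℝ) * x ^ ((2 : ℝ) - 1)) •
      ((1 / √(2 * π * x ^ (2 : ℝ))) * rexp (-0 ^ 2 / (2 * x ^ (2 : ℝ)) - x ^ (2 : ℝ) / 2))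
      = 2 / √(2 * π) * rexp (-(1 / 2) * x ^ 2) := by
    intro x hx
    have hx' : 0 < x := hx
    rw [show (2 : ℝ) - 1 = 1 by norm_num, Real.rpow_one, Real.rpow_two,
      Real.sqrt_mul (by positivity), Real.sqrt_sq hx'.le, smul_eq_mul,
      show -0 ^ 2 / (2 * x ^ 2) - x ^ 2 / 2 = -(1 / 2) * x ^ 2 by simp; ring]
    field_simp
  rw [setIntegral_congr_fun measurableSet_Ioi this, integral_const_mul, integral_gaussian_Ioi,
    show π / (1 / 2) = 2 * π by ring]
  have : 0 < √(2 * π) := by positivity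
  field_simp

/-- For every real `a`,
`∫_0^∞ (2πλ)^{-1/2} exp(-a²/(2λ) - λ/2) dλ = exp(-|a|)`. -/
theorem scale_mixture_integral (a : ℝ) :
    ∫ l in Set.Ioi (0 : ℝ),
      (1 / Real.sqrt (2 * Real.pi * l)) * Real.exp (-a ^ 2 / (2 * l) - l / 2)
      = Real.exp (-|a|) := by
  rcases eq_or_ne a 0 with rfl | ha
  · rw [smi_zero]; simp
  · have := smi_pos |a| (abs_pos.2 ha)
    rwa [sq_abs] at this
end

section
/- For every c ≥ 0 and every ζ ∈ ℝ, exp(−2c·max(0, ζ)) = ∫_0^∞ (2πλ)^{−1/2} · exp(−(λ + cζ)²/(2λ)) dλ. -/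
open MeasureTheory Real

noncomputable def smQ (x : ℝ) : ℝ := ∫ t in (0:ℝ)..x, Real.exp (-(1/2) * t ^ 2)

lemma smQ_deriv (x : ℝ) : HasDerivAt smQ (Real.exp (-(1/2) * x ^ 2)) x := by
  have hcont : Continuous (fun t : ℝ => Real.exp (-(1/2) * t ^ 2)) := by fun_prop
  exact (hcont.integral_hasStrictDerivAt 0 x).hasDerivAt

lemma smQ_top : Filter.Tendsto smQ Filter.atTop (nhds (Real.sqrt (2 * π) / 2)) := by
  have h := intervalIntegral_tendsto_integral_Ioi (0:ℝ)
    (integrable_exp_neg_mul_sq (b := 1/2) (by norm_num)).integrableOn Filter.tendsto_id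
  rw [integral_gaussian_Ioi] at h
  have e : π / (1/2) = 2 * π := by ring
  rw [e] at h
  exact h

lemma smQ_neg (x : ℝ) : smQ (-x) = - smQ x := by
  unfold smQ
  have h := intervalIntegral.integral_comp_neg (a := 0) (b := x)
    (fun t : ℝ => Real.exp (-(1/2) * t ^ 2))
  simp only [neg_sq, neg_zero] at h
  rw [h, intervalIntegral.integral_symm]

lemma smQ_bot : Filter.Tendsto smQ Filter.atBot (nhds (-(Real.sqrt (2 * π) / 2))) := by
  have h := (smQ_top.comp Filter.tendsto_neg_atBot_atTop).neg
  refine h.congr fun x => ?_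
  simp [smQ_neg]

noncomputable def smH (b l : ℝ) : ℝ :=
  smQ (√l - b / √l) + Real.exp (2 * b) * smQ (√l + b / √l)

lemma smH_deriv (b l : ℝ) (hl : 0 < l) :
    HasDerivAt (smH b) (1 / √l * Real.exp (-(l - b) ^ 2 / (2 * l))) l := by
  have hs : 0 < √l := Real.sqrt_pos.2 hl
  have h1 : HasDerivAt (fun l : ℝ => √l) (1 / (2 * √l)) l := Real.hasDerivAt_sqrt hl.ne'
  have h2 := (hasDerivAt_const l b).div h1 hs.ne'
  have h3 := (smQ_deriv (√l - b / √l)).comp l (h1.sub h2)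
  have h4 := (smQ_deriv (√l + b / √l)).comp l (h1.add h2)
  have h5 := h3.add (h4.const_mul (Real.exp (2 * b)))
  refine HasDerivAt.congr_deriv h5 ?_
  have e1 : -(1/2) * (√l - b / √l) ^ 2 = -(l - b) ^ 2 / (2 * l) := by
    obtain ⟨s, hs', rfl⟩ : ∃ s : ℝ, 0 < s ∧ l = s ^ 2 := ⟨√l, hs, (Real.sq_sqrt hl.le).symm⟩
    rw [Real.sqrt_sq hs'.le]
    field_simp
  have e2 : Real.exp (2 * b) * Real.exp (-(1/2) * (√l + b / √l) ^ 2)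
      = Real.exp (-(l - b) ^ 2 / (2 * l)) := by
    rw [← Real.exp_add]
    congr 1
    obtain ⟨s, hs', rfl⟩ : ∃ s : ℝ, 0 < s ∧ l = s ^ 2 := ⟨√l, hs, (Real.sq_sqrt hl.le).symm⟩
    rw [Real.sqrt_sq hs'.le]
    field_simp
    ring
  rw [e1, ← mul_assoc, e2]
  field_simp
  ring

lemma smH_top (b : ℝ) : Filter.Tendsto (smH b) Filter.atTop
    (nhds (√(2 * π) / 2 + Real.exp (2 * b) * (√(2 * π) / 2))) := by
  have h0 : Filter.Tendsto (fun l : ℝ => b / √l) Filter.atTop (nhds 0) :=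
    tendsto_const_nhds.div_atTop Real.tendsto_sqrt_atTop
  have hm : Filter.Tendsto (fun l : ℝ => √l - b / √l) Filter.atTop Filter.atTop := by
    simpa only [sub_eq_add_neg] using Real.tendsto_sqrt_atTop.atTop_add h0.neg
  have hp : Filter.Tendsto (fun l : ℝ => √l + b / √l) Filter.atTop Filter.atTop :=
    Real.tendsto_sqrt_atTop.atTop_add h0
  exact (smQ_top.comp hm).add ((smQ_top.comp hp).const_mul _)

lemma smH_zero (b : ℝ) (hb : 0 ≤ b) : Filter.Tendsto (smH b) (nhdsWithin 0 (Set.Ioi 0))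
    (nhds (-(√(2 * π) / 2) + Real.exp (2 * b) * (√(2 * π) / 2))) := by
  have hs : Filter.Tendsto (fun l : ℝ => √l) (nhdsWithin 0 (Set.Ioi 0)) (nhds 0) := by
    have := (Real.continuous_sqrt.tendsto 0).mono_left
      (nhdsWithin_le_nhds (s := Set.Ioi (0:ℝ)))
    simpa using this
  rcases hb.eq_or_lt with rfl | hb
  · have hq : Filter.Tendsto smQ (nhds 0) (nhds 0) := by
      have := (smQ_deriv 0).continuousAt.tendsto
      simpa [smQ] using this
    have := (hq.comp hs).add ((hq.comp hs).const_mul (Real.exp (2 * 0)))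
    convert this using 2
    · simp [smH]
    · simp
  · have hs' : Filter.Tendsto (fun l : ℝ => √l) (nhdsWithin 0 (Set.Ioi 0))
        (nhdsWithin 0 (Set.Ioi 0)) := by
      refine tendsto_nhdsWithin_iff.2 ⟨hs, ?_⟩
      filter_upwards [self_mem_nhdsWithin] with l hl
      exact Real.sqrt_pos.2 hl
    have hd : Filter.Tendsto (fun l : ℝ => b / √l) (nhdsWithin 0 (Set.Ioi 0)) Filter.atTop := by
      simpa only [div_eq_mul_inv, Function.comp_def] using
        (tendsto_inv_nhdsGT_zero.comp hs').const_mul_atTop hb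
    have hp := hs.add_atTop hd
    have hm : Filter.Tendsto (fun l : ℝ => √l - b / √l) (nhdsWithin 0 (Set.Ioi 0))
        Filter.atBot := by
      simpa only [sub_eq_add_neg, Function.comp_def] using
        hs.add_atBot (Filter.tendsto_neg_atTop_atBot.comp hd)
    exact (smQ_bot.comp hm).add ((smQ_top.comp hp).const_mul _)

lemma sm_int (b : ℝ) (hb : 0 ≤ b) :
    ∫ l in Set.Ioi (0 : ℝ), 1 / √l * Real.exp (-(l - b) ^ 2 / (2 * l)) = √(2 * π) := by
  set m := -(√(2 * π) / 2) + Real.exp (2 * b) * (√(2 * π) / 2) with hm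
  have key := integral_Ioi_of_hasDerivAt_of_nonneg (a := 0)
    (g := Function.update (smH b) 0 m)
    (g' := fun l => 1 / √l * Real.exp (-(l - b) ^ 2 / (2 * l)))
    (l := √(2 * π) / 2 + Real.exp (2 * b) * (√(2 * π) / 2)) ?_ ?_ ?_ ?_
  · rw [key, Function.update_self, hm]; ring
  · rw [continuousWithinAt_update_same]
    have e : Set.Ici (0:ℝ) \ {0} = Set.Ioi 0 := by simp
    rw [e]
    exact smH_zero b hb
  · intro x hx
    refine (smH_deriv b x hx).congr_of_eventuallyEq ?_
    filter_upwards [eventually_ne_nhds (ne_of_gt hx)] with y hy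
    exact Function.update_of_ne hy _ _
  · intro x hx
    positivity
  · refine (smH_top b).congr' ?_
    filter_upwards [Filter.eventually_ne_atTop 0] with y hy
    exact (Function.update_of_ne hy _ _).symm

/-- Scale Mixture Representation, Lemma 2: for every `c ≥ 0` and `ζ ∈ ℝ`,
`exp(-2c·max(0,ζ)) = ∫_0^∞ (2πλ)^{-1/2} exp(-(λ + cζ)²/(2λ)) dλ`. -/
theorem scale_mixture_representation (c : ℝ) (hc : 0 ≤ c) (ζ : ℝ) :
    Real.exp (-2 * c * max 0 ζ) =
      ∫ l in Set.Ioi (0 : ℝ),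
        (1 / Real.sqrt (2 * Real.pi * l)) * Real.exp (-(l + c * ζ) ^ 2 / (2 * l)) := by
  have hpi : 0 < √(2 * π) := Real.sqrt_pos.2 (by positivity)
  have e : ∀ l ∈ Set.Ioi (0:ℝ),
      (1 / Real.sqrt (2 * Real.pi * l)) * Real.exp (-(l + c * ζ) ^ 2 / (2 * l)) =
      (Real.exp (-2 * c * max 0 ζ) / √(2 * π)) *
        (1 / √l * Real.exp (-(l - |c * ζ|) ^ 2 / (2 * l))) := by
    intro l hl
    have hl : 0 < l := hl
    have e1 : -(l + c * ζ) ^ 2 / (2 * l)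
        = -2 * c * max 0 ζ + -(l - |c * ζ|) ^ 2 / (2 * l) := by
      rw [abs_mul, abs_of_nonneg hc]
      rcases le_total 0 ζ with h | h
      · rw [max_eq_right h, abs_of_nonneg h]
        field_simp
        ring
      · rw [max_eq_left h, abs_of_nonpos h]
        ring
    rw [e1, Real.exp_add, Real.sqrt_mul (by positivity : (0:ℝ) ≤ 2 * π)]
    field_simp
  rw [setIntegral_congr_fun measurableSet_Ioi e, integral_const_mul, sm_int _ (abs_nonneg _)]
  field_simp
end

section
/- For every c ≥ 0, every ε ≥ 0, and every Δ ∈ ℝ, exp(−2c·max(0, |Δ| − ε)) = (∫_0^∞ (2πλ)^{−1/2} exp(−(λ + c(Δ − ε))²/(2λ)) dλ) · (∫_0^∞ (2πω)^{−1/2} exp(−(ω − c(Δ + ε))²/(2ω)) dω). -/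
open MeasureTheory Real

open Filter Topology in
theorem dsm_aux_ftc (f f' : ℝ → ℝ) (L m : ℝ) (h0 : Tendsto f (𝓝[>] 0) (𝓝 L))
    (hd : ∀ x ∈ Set.Ioi (0:ℝ), HasDerivAt f (f' x) x) (hp : ∀ x ∈ Set.Ioi (0:ℝ), 0 ≤ f' x)
    (hi : Tendsto f atTop (𝓝 m)) : ∫ x in Set.Ioi (0:ℝ), f' x = m - L := by
  have key := integral_Ioi_of_hasDerivAt_of_nonneg (a := (0:ℝ)) (g := Function.update f 0 L)
    (g' := f') (l := m) ?_ ?_ hp ?_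
  · simpa using key
  · rw [continuousWithinAt_update_same, Set.Ici_sdiff_left]
    exact h0
  · intro x hx
    refine (hd x hx).congr_of_eventuallyEq ?_
    filter_upwards [Ioi_mem_nhds hx] with y hy
    exact Function.update_of_ne (ne_of_gt hy) _ _
  · refine hi.congr' ?_
    filter_upwards [Ioi_mem_atTop (0:ℝ)] with y hy
    exact (Function.update_of_ne (ne_of_gt hy) _ _).symm

open Filter Topology in
theorem dsm_aux_one (a : ℝ) (ha : 0 ≤ a) :
    ∫ l in Set.Ioi (0 : ℝ),
      (1 / Real.sqrt (2 * Real.pi * l)) * Real.exp (-(l - a) ^ 2 / (2 * l)) = 1 := by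
  set G : ℝ → ℝ := fun x => ∫ t in (0:ℝ)..x, Real.exp (-(1/2) * t ^ 2) with hG
  have hGd : ∀ x, HasDerivAt G (Real.exp (-(1/2) * x ^ 2)) x := by
    intro x
    have hc : Continuous fun t : ℝ => Real.exp (-(1/2) * t ^ 2) := by fun_prop
    exact intervalIntegral.integral_hasDerivAt_right (hc.intervalIntegrable _ _)
      hc.stronglyMeasurable.stronglyMeasurableAtFilter hc.continuousAt
  have hGneg : ∀ x, G (-x) = - G x := by
    intro x
    have h := intervalIntegral.integral_comp_neg (a := 0) (b := x)
      (fun t : ℝ => Real.exp (-(1/2) * t ^ 2))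
    simp only [neg_sq, neg_zero] at h
    simp only [hG]
    rw [h, intervalIntegral.integral_symm]
  have hs : 0 < √(2 * π) := by positivity
  have hGt : Tendsto G atTop (𝓝 (√(2 * π) / 2)) := by
    have h := intervalIntegral_tendsto_integral_Ioi (l := atTop) (b := id) (μ := volume) (0:ℝ)
      (integrable_exp_neg_mul_sq (b := 1/2) (by norm_num)).integrableOn tendsto_id
    rw [integral_gaussian_Ioi] at h
    rw [show 2 * π = π / (1/2) by ring]
    exact h
  have hGb : Tendsto G atBot (𝓝 (-(√(2 * π) / 2))) := by
    have h := (hGt.comp tendsto_neg_atBot_atTop).neg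
    refine h.congr ?_
    intro x
    simp [hGneg]
  have hsq : Tendsto (fun l : ℝ => √l) atTop atTop := Real.tendsto_sqrt_atTop
  have hdiv : Tendsto (fun l : ℝ => a / √l) atTop (𝓝 0) := hsq.const_div_atTop a
  have hsq0 : Tendsto (fun l : ℝ => √l) (𝓝[>] 0) (𝓝 0) := by
    have : Tendsto (fun l : ℝ => √l) (𝓝 0) (𝓝 (√0)) := Real.continuous_sqrt.tendsto 0
    rw [Real.sqrt_zero] at this
    exact this.mono_left nhdsWithin_le_nhds
  have hsq0' : Tendsto (fun l : ℝ => √l) (𝓝[>] 0) (𝓝[>] 0) := by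
    refine tendsto_nhdsWithin_iff.2 ⟨hsq0, ?_⟩
    filter_upwards [self_mem_nhdsWithin] with l hl
    exact Real.sqrt_pos.2 hl
  have hm : Tendsto (fun l : ℝ => √l - a / √l) atTop atTop := by
    simpa [sub_eq_add_neg] using hsq.atTop_add hdiv.neg
  have hpl : Tendsto (fun l : ℝ => √l + a / √l) atTop atTop := hsq.atTop_add hdiv
  set F : ℝ → ℝ := fun l =>
    (G (√l - a / √l) + Real.exp (2 * a) * G (√l + a / √l)) / √(2 * π) with hF
  have h1 : Tendsto F atTop (𝓝 ((1 + Real.exp (2 * a)) / 2)) := by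
    have h := ((hGt.comp hm).add ((hGt.comp hpl).const_mul (Real.exp (2 * a)))).div_const (√(2 * π))
    have e : (1 + Real.exp (2 * a)) / 2
        = (√(2 * π) / 2 + Real.exp (2 * a) * (√(2 * π) / 2)) / √(2 * π) := by
      generalize √(2 * π) = s at hs
      field_simp
    rw [e]
    exact h
  have h2 : Tendsto F (𝓝[>] 0) (𝓝 ((-1 + Real.exp (2 * a)) / 2)) := by
    rcases ha.eq_or_lt with h | h
    · subst h
      have hG0 : Tendsto G (𝓝 0) (𝓝 0) := by
        have := (hGd 0).continuousAt.tendsto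
        simpa [hG] using this
      have h := ((hG0.comp hsq0).add ((hG0.comp hsq0).const_mul (1:ℝ))).div_const (√(2 * π))
      simpa [hF, Function.comp_def] using h
    · have hd0 : Tendsto (fun l : ℝ => a / √l) (𝓝[>] 0) atTop := by
        simpa [div_eq_mul_inv, Function.comp_def] using
          (tendsto_inv_nhdsGT_zero.comp hsq0').const_mul_atTop h
      have hpl0 : Tendsto (fun l : ℝ => √l + a / √l) (𝓝[>] 0) atTop := hsq0.add_atTop hd0
      have hm0 : Tendsto (fun l : ℝ => √l - a / √l) (𝓝[>] 0) atBot := by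
        simpa [sub_eq_add_neg] using hsq0.add_atBot (tendsto_neg_atTop_atBot.comp hd0)
      have h := ((hGb.comp hm0).add
        ((hGt.comp hpl0).const_mul (Real.exp (2 * a)))).div_const (√(2 * π))
      have e : (-1 + Real.exp (2 * a)) / 2
          = (-(√(2 * π) / 2) + Real.exp (2 * a) * (√(2 * π) / 2)) / √(2 * π) := by
        generalize √(2 * π) = s at hs
        field_simp
      rw [e]
      exact h
  rw [dsm_aux_ftc F _ _ _ h2 ?_ ?_ h1]
  · ring
  · intro x hx
    have hx' : (0:ℝ) < x := hx
    have hr : 0 < √x := Real.sqrt_pos.2 hx'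
    have hxs : √x ^ 2 = x := Real.sq_sqrt hx'.le
    have d0 := Real.hasDerivAt_sqrt hx'.ne'
    have d1 := (hasDerivAt_const x a).div d0 hr.ne'
    have dm := (hGd _).comp x (d0.sub d1)
    have dp := ((hGd _).comp x (d0.add d1)).const_mul (Real.exp (2 * a))
    have d := (dm.add dp).div_const (√(2 * π))
    refine HasDerivAt.congr_deriv d ?_
    simp only [Pi.sub_apply, Pi.add_apply, Pi.div_apply]
    have e1 : Real.exp (-(1/2) * (√x - a / √x) ^ 2) = Real.exp (-(x - a) ^ 2 / (2 * x)) := by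
      congr 1
      rw [← hxs, Real.sqrt_sq hr.le]
      field_simp
    have e2 : Real.exp (2 * a) * Real.exp (-(1/2) * (√x + a / √x) ^ 2)
        = Real.exp (-(x - a) ^ 2 / (2 * x)) := by
      rw [← Real.exp_add]
      congr 1
      rw [← hxs, Real.sqrt_sq hr.le]
      field_simp
      ring
    rw [← mul_assoc, e2, e1, Real.sqrt_mul (x := 2 * π) (by positivity) x]
    generalize √(2 * π) = s at hs
    field_simp
    ring
  · intro x hx
    positivity

theorem dsm_aux (u : ℝ) :
    ∫ l in Set.Ioi (0 : ℝ),
      (1 / Real.sqrt (2 * Real.pi * l)) * Real.exp (-(l + u) ^ 2 / (2 * l))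
      = Real.exp (-u - |u|) := by
  have h1 := congrArg (fun t => Real.exp (-u - |u|) * t) (dsm_aux_one |u| (abs_nonneg u))
  simp only [mul_one] at h1
  rw [← integral_const_mul] at h1
  refine Eq.trans ?_ h1
  refine setIntegral_congr_fun measurableSet_Ioi ?_
  intro l hl
  have hl' : (0:ℝ) < l := hl
  simp only
  rw [mul_left_comm, ← Real.exp_add]
  congr 2
  have := sq_abs u
  field_simp
  nlinarith

/-- Dual Scale Mixture Representation: for `c ≥ 0`, `ε ≥ 0` and `Δ ∈ ℝ`,
`exp(-2c·max(0, |Δ| - ε))` equals the product of two scale-mixture-of-Gaussians integrals. -/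
theorem dual_scale_mixture_representation (c ε Δ : ℝ) (hc : 0 ≤ c) (hε : 0 ≤ ε) :
    Real.exp (-2 * c * max 0 (|Δ| - ε)) =
      (∫ l in Set.Ioi (0 : ℝ),
        (1 / Real.sqrt (2 * Real.pi * l)) * Real.exp (-(l + c * (Δ - ε)) ^ 2 / (2 * l))) *
      (∫ w in Set.Ioi (0 : ℝ),
        (1 / Real.sqrt (2 * Real.pi * w)) * Real.exp (-(w - c * (Δ + ε)) ^ 2 / (2 * w))) := by
  have h2 := dsm_aux (-(c * (Δ + ε)))
  simp only [← sub_eq_add_neg] at h2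
  rw [dsm_aux, h2, ← Real.exp_add]
  congr 1
  rw [abs_neg, abs_mul, abs_mul, abs_of_nonneg hc]
  have : 2 * max 0 (|Δ| - ε) = |Δ - ε| + |Δ + ε| - 2 * ε := by
    rcases max_cases 0 (|Δ| - ε) with h | h <;> rcases abs_cases Δ with h3 | h3 <;>
    rcases abs_cases (Δ - ε) with h4 | h4 <;> rcases abs_cases (Δ + ε) with h5 | h5 <;> linarith
  linear_combination (-c) * this
end

section
/- Let ν ≠ 0, c ∈ ℝ, ε ∈ ℝ, real responses y_1, …, y_D, positive reals λ_1, …, λ_D > 0 and ω_1, …, ω_D > 0, and vectors z̄_1, …, z̄_D ∈ ℝᴷ. Set ρ_d = 1/λ_d + 1/ω_d, ψ_d = (y_d − ε)/λ_d + (y_d + ε)/ω_d, A = ν⁻²I + c²∑_d ρ_d z̄_d z̄_dᵀ (which is positive definite, hence invertible), μ = A⁻¹ · (c² ∑_d ψ_d z̄_d), and for η ∈ ℝᴷ let Δ_d(η) = y_d − η⊤z̄_d. Then there exists a constant C ∈ ℝ, independent of η, such that for all η ∈ ℝᴷ: −∑_{k=1}^K η_k²/(2ν²) − ∑_{d=1}^D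 [ (λ_d + c(Δ_d(η) − ε))²/(2λ_d) + (ω_d − c(Δ_d(η) + ε))²/(2ω_d) ] = −(1/2)(η − μ)ᵀ A (η − μ) + C. -/
open Matrix

/-- completing the square for the Gibbs MedLDA regression posterior,
Eq. (16) of the paper: with `ρ_d = 1/λ_d + 1/ω_d`,
`ψ_d = (y_d - ε)/λ_d + (y_d + ε)/ω_d`, `A = ν⁻²I + c²∑_d ρ_d z̄_d z̄_dᵀ`,
`μ = A⁻¹ (c² ∑_d ψ_d z̄_d)` and `Δ_d(η) = y_d - η⊤z̄_d`, there is a constant `C`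
independent of `η` such that for all `η`,
`-∑_k η_k²/(2ν²) - ∑_d [(λ_d + c(Δ_d(η) - ε))²/(2λ_d) + (ω_d - c(Δ_d(η) + ε))²/(2ω_d)]
  = -(1/2)(η - μ)ᵀA(η - μ) + C`. -/
theorem gibbs_medlda_regression_eta_posterior_gaussian {K D : ℕ}
    (ν c ε : ℝ) (hν : ν ≠ 0) (y : Fin D → ℝ)
    (lam ω : Fin D → ℝ) (hlam : ∀ d, 0 < lam d) (hω : ∀ d, 0 < ω d)
    (z : Fin D → Fin K → ℝ)
    (ρ ψ : Fin D → ℝ)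
    (hρ : ∀ d, ρ d = 1 / lam d + 1 / ω d)
    (hψ : ∀ d, ψ d = (y d - ε) / lam d + (y d + ε) / ω d)
    (A : Matrix (Fin K) (Fin K) ℝ)
    (hA : A = (ν ^ 2)⁻¹ • (1 : Matrix (Fin K) (Fin K) ℝ) +
        c ^ 2 • ∑ d, ρ d • Matrix.vecMulVec (z d) (z d))
    (μ : Fin K → ℝ)
    (hμ : μ = A⁻¹.mulVec (c ^ 2 • ∑ d, ψ d • z d)) :
    ∃ C : ℝ, ∀ η : Fin K → ℝ,
      -(∑ k, (η k) ^ 2 / (2 * ν ^ 2)) -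
          ∑ d, ((lam d + c * ((y d - η ⬝ᵥ z d) - ε)) ^ 2 / (2 * lam d) +
                (ω d - c * ((y d - η ⬝ᵥ z d) + ε)) ^ 2 / (2 * ω d)) =
        -(1 / 2) * ((η - μ) ⬝ᵥ A.mulVec (η - μ)) + C := by
  have hB : ∀ x v : Fin K → ℝ, x ⬝ᵥ A.mulVec v =
      (ν ^ 2)⁻¹ * (x ⬝ᵥ v) + c ^ 2 * ∑ d, ρ d * ((x ⬝ᵥ z d) * (v ⬝ᵥ z d)) := by
    intro x v
    rw [hA, Matrix.add_mulVec, Matrix.smul_mulVec, Matrix.smul_mulVec, Matrix.one_mulVec,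
      Matrix.sum_mulVec, dotProduct_add, dotProduct_smul, dotProduct_smul, dotProduct_sum,
      smul_eq_mul, smul_eq_mul]
    congr 2
    apply Finset.sum_congr rfl
    intro d _
    rw [Matrix.smul_mulVec, dotProduct_smul, Matrix.vecMulVec_mulVec, smul_eq_mul]
    simp only [op_smul_eq_smul, dotProduct_smul, smul_eq_mul]
    rw [dotProduct_comm (z d) v]
    ring
  have hν2 : 0 < (ν ^ 2)⁻¹ := by positivity
  have hdet : A.det ≠ 0 := by
    intro h0
    obtain ⟨v, hv, hv0⟩ := Matrix.exists_mulVec_eq_zero_iff.mpr h0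
    have h1 := hB v v
    rw [hv0, dotProduct_zero] at h1
    have h2 : 0 ≤ c ^ 2 * ∑ d, ρ d * ((v ⬝ᵥ z d) * (v ⬝ᵥ z d)) := by
      apply mul_nonneg (sq_nonneg c)
      apply Finset.sum_nonneg
      intro d _
      have := hlam d
      have := hω d
      rw [hρ d]
      exact mul_nonneg (by positivity) (mul_self_nonneg _)
    have h3 : 0 ≤ v ⬝ᵥ v := Finset.sum_nonneg fun i _ => mul_self_nonneg (v i)
    have h4 : v ⬝ᵥ v ≠ 0 := fun h => hv (dotProduct_self_eq_zero.mp h)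
    have h5 : 0 < v ⬝ᵥ v := lt_of_le_of_ne h3 (Ne.symm h4)
    have h6 := mul_pos hν2 h5
    linarith
  have hAμ : A.mulVec μ = c ^ 2 • ∑ d, ψ d • z d := by
    rw [hμ, Matrix.mulVec_mulVec, Matrix.mul_nonsing_inv A (isUnit_iff_ne_zero.mpr hdet),
      Matrix.one_mulVec]
  have hL : ∀ x : Fin K → ℝ, x ⬝ᵥ A.mulVec μ = c ^ 2 * ∑ d, ψ d * (x ⬝ᵥ z d) := by
    intro x
    rw [hAμ, dotProduct_smul, dotProduct_sum, smul_eq_mul]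
    simp only [dotProduct_smul, smul_eq_mul]
  have hS : ∀ x : Fin K → ℝ, μ ⬝ᵥ A.mulVec x = x ⬝ᵥ A.mulVec μ := by
    intro x
    rw [hB, hB, dotProduct_comm μ x]
    simp only [mul_comm (μ ⬝ᵥ z _)]
  refine ⟨1 / 2 * (μ ⬝ᵥ A.mulVec μ) - ∑ d, (lam d / 2 + ω d / 2 - 2 * c * ε
    + c ^ 2 * (y d - ε) ^ 2 / (2 * lam d) + c ^ 2 * (y d + ε) ^ 2 / (2 * ω d)), ?_⟩
  intro η
  have hsum : ∑ d, ((lam d + c * ((y d - η ⬝ᵥ z d) - ε)) ^ 2 / (2 * lam d) +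
                (ω d - c * ((y d - η ⬝ᵥ z d) + ε)) ^ 2 / (2 * ω d)) =
      1 / 2 * (c ^ 2 * ∑ d, ρ d * ((η ⬝ᵥ z d) * (η ⬝ᵥ z d)))
      - c ^ 2 * ∑ d, ψ d * (η ⬝ᵥ z d)
      + ∑ d, (lam d / 2 + ω d / 2 - 2 * c * ε
    + c ^ 2 * (y d - ε) ^ 2 / (2 * lam d) + c ^ 2 * (y d + ε) ^ 2 / (2 * ω d)) := by
    simp only [Finset.mul_sum]
    rw [← Finset.sum_sub_distrib, ← Finset.sum_add_distrib]
    apply Finset.sum_congr rfl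
    intro d _
    have h1 := (hlam d).ne'
    have h2 := (hω d).ne'
    rw [hρ d, hψ d]
    field_simp
    ring
  have hq : ∑ k, (η k) ^ 2 / (2 * ν ^ 2) = 1 / 2 * ((ν ^ 2)⁻¹ * (η ⬝ᵥ η)) := by
    simp only [dotProduct, Finset.mul_sum]
    apply Finset.sum_congr rfl
    intro k _
    field_simp
  rw [hsum, hq, Matrix.mulVec_sub, dotProduct_sub, sub_dotProduct, sub_dotProduct, hS η, hL η,
    hB η η]
  ring
end
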